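/- Let (M, ∇, ∘, e, ∇*, *, E) be a bi-flat F-manifold with L = E∘. Then the anticommutator identity (d_∇ · d_{L∇*} + d_{L∇*} · d_∇)(Z) = 0 holds for every vector field Z; explicitly, for all vector fields X, Y, Z: ∇_X∇*_{LY}Z − ∇*_{LY}∇_X Z − ∇_Y∇*_{LX}Z + ∇*_{LX}∇_Y Z − ∇*_{L[X,Y]}Z + ∇_{[Y,LX]+[LY,X]+L[X,Y]}Z = 0. -/

import Mathlib

/-!
The dual connection is determined by the natural one: `∇*_X Y = ∇_X Y - ∇_{X*Y} E`. Indeed the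
value of `∇* - ∇` at `(X, Y)` depends only on `X ∘ Y`, and at `(X, E)` it is `-∇_X E`, while
`X ∘ Y = (X * Y) ∘ E`. Hence `∇*_{LY} Z = ∇_{LY} Z - ∇_{Y∘Z} E`, and the anticommutator splits
into two parts. The terms of the form `∇∇Z` and `∇Z` cancel by flatness of `∇`. In the remaining
ones, which are covariant derivatives of `E`, linearity of the Euler field turns
`∇_X ∇_{Y∘Z} E` into `∇_{∇_X(Y∘Z)} E`, so that they add up to `∇_W E`, where `W = 0` by the
symmetry of `∇(∘)` and the vanishing of the torsion.
-/

/-- Abstract algebraic model of a bi-flat F-manifold: `V` plays the role of the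
(global) vector fields, with its Lie bracket, the two products `o` (`∘`, with unit `e`)
and `star` (`*`, with unit `E`), and the two flat torsionless connections
`nab` (`∇`, the natural connection) and `nabS` (`∇*`, the dual connection). -/
structure BiFlatF (V : Type*) [LieRing V] [Module ℝ V] where
  o : V →ₗ[ℝ] V →ₗ[ℝ] V
  star : V →ₗ[ℝ] V →ₗ[ℝ] V
  nab : V →ₗ[ℝ] V →ₗ[ℝ] V
  nabS : V →ₗ[ℝ] V →ₗ[ℝ] V
  e : V
  E : V
  o_comm : ∀ X Y, o X Y = o Y X
  o_assoc : ∀ X Y Z, o (o X Y) Z = o X (o Y Z)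
  star_comm : ∀ X Y, star X Y = star Y X
  star_assoc : ∀ X Y Z, star (star X Y) Z = star X (star Y Z)
  e_unit : ∀ X, o e X = X
  E_unit : ∀ X, star E X = X
  /-- `X * Y = (E ∘)⁻¹ (X ∘ Y)` -/
  star_def : ∀ X Y, o E (star X Y) = o X Y
  /-- `L = E ∘` is invertible -/
  L_inj : Function.Injective fun X => o E X
  nab_torsion : ∀ X Y, nab X Y - nab Y X = ⁅X, Y⁆
  nab_flat : ∀ X Y Z, nab X (nab Y Z) - nab Y (nab X Z) - nab ⁅X, Y⁆ Z = 0
  nabS_torsion : ∀ X Y, nabS X Y - nabS Y X = ⁅X, Y⁆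
  nabS_flat : ∀ X Y Z, nabS X (nabS Y Z) - nabS Y (nabS X Z) - nabS ⁅X, Y⁆ Z = 0
  nab_e : ∀ X, nab X e = 0
  nabS_E : ∀ X, nabS X E = 0
  /-- symmetry of `∇ c` (equivalent to flatness of the pencil `∇ - λ ∘`) -/
  nab_c_symm : ∀ X Y Z,
    nab X (o Y Z) - o (nab X Y) Z - o Y (nab X Z)
      = nab Y (o X Z) - o (nab Y X) Z - o X (nab Y Z)
  /-- symmetry of `∇* c*` -/
  nabS_cs_symm : ∀ X Y Z,
    nabS X (star Y Z) - star (nabS X Y) Z - star Y (nabS X Z)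
      = nabS Y (star X Z) - star (nabS Y X) Z - star X (nabS Y Z)
  /-- `E` is an Euler vector field: `[e,E] = e` -/
  euler_e : ⁅e, E⁆ = e
  /-- `Lie_E (∘) = ∘` -/
  euler_o : ∀ X Y, ⁅E, o X Y⁆ - o ⁅E, X⁆ Y - o X ⁅E, Y⁆ = o X Y
  /-- `E` is linear: `∇² E = 0` -/
  euler_lin : ∀ X Y, nab X (nab Y E) - nab (nab X Y) E = 0
  /-- compatibility `(d_∇ - d_∇*)(X ∘) = 0` -/
  compat : ∀ X Y Z,
    nab Y (o X Z) - nab Z (o X Y) = nabS Y (o X Z) - nabS Z (o X Y)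

namespace BiFlatF

variable {V : Type*} [LieRing V] [Module ℝ V] (B : BiFlatF V)

/-- The difference `∇* - ∇` at `(X, Y)` depends only on `X ∘ Y`: this is the compatibility
condition with one of its arguments equal to `e`. -/
theorem nabS_sub_nab_eq (X Y : V) :
    B.nabS X Y - B.nab X Y = B.nabS B.e (B.o X Y) - B.nab B.e (B.o X Y) := by
  have h := B.compat Y X B.e
  rw [B.o_comm Y B.e, B.e_unit, B.o_comm Y X] at h
  rw [sub_eq_sub_iff_add_eq_add] at h ⊢
  exact h.symm.trans (add_comm _ _)

theorem nabS_eq (X Y : V) : B.nabS X Y = B.nab X Y - B.nab (B.star X Y) B.E := by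
  have h₁ := B.nabS_sub_nab_eq X Y
  have h₂ := B.nabS_sub_nab_eq (B.star X Y) B.E
  rw [B.o_comm _ B.E, B.star_def, ← h₁, B.nabS_E, zero_sub] at h₂
  rw [sub_eq_add_neg, h₂]
  abel

theorem star_L (Y Z : V) : B.star (B.o B.E Y) Z = B.o Y Z :=
  B.L_inj (by simp only [B.star_def, B.o_assoc])

theorem nabS_L (Y Z : V) :
    B.nabS (B.o B.E Y) Z = B.nab (B.o B.E Y) Z - B.nab (B.o Y Z) B.E := by
  rw [B.nabS_eq, B.star_L]

end BiFlatF

/-- On a bi-flat F-manifold with `L = E∘`, the anticommutator identity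
`(d_∇ · d_{L∇*} + d_{L∇*} · d_∇)(Z) = 0` holds on vector fields; explicitly
`∇_X∇*_{LY}Z - ∇*_{LY}∇_X Z - ∇_Y∇*_{LX}Z + ∇*_{LX}∇_Y Z - ∇*_{L[X,Y]}Z
  + ∇_{[Y,LX]+[LY,X]+L[X,Y]}Z = 0`. -/
theorem bicomplex_anticommutator_on_vector_fields
    {V : Type*} [LieRing V] [Module ℝ V] (B : BiFlatF V)
    (hNL : ∀ X Y : V,
      ⁅B.o B.E X, B.o B.E Y⁆ + B.o B.E (B.o B.E ⁅X, Y⁆)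
        - B.o B.E ⁅X, B.o B.E Y⁆ - B.o B.E ⁅B.o B.E X, Y⁆ = 0) :
    ∀ X Y Z : V,
      B.nab X (B.nabS (B.o B.E Y) Z) - B.nabS (B.o B.E Y) (B.nab X Z)
      - B.nab Y (B.nabS (B.o B.E X) Z) + B.nabS (B.o B.E X) (B.nab Y Z)
      - B.nabS (B.o B.E ⁅X, Y⁆) Z
      + B.nab (⁅Y, B.o B.E X⁆ + ⁅B.o B.E Y, X⁆ + B.o B.E ⁅X, Y⁆) Z = 0 := by
  intro X Y Z
  have hXY : B.nab ⁅X, B.o B.E Y⁆ Z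
      = B.nab X (B.nab (B.o B.E Y) Z) - B.nab (B.o B.E Y) (B.nab X Z) :=
    (sub_eq_zero.1 (B.nab_flat X (B.o B.E Y) Z)).symm
  have hYX : B.nab ⁅Y, B.o B.E X⁆ Z
      = B.nab Y (B.nab (B.o B.E X) Z) - B.nab (B.o B.E X) (B.nab Y Z) :=
    (sub_eq_zero.1 (B.nab_flat Y (B.o B.E X) Z)).symm
  have hW : B.nab X (B.o Y Z) - B.o Y (B.nab X Z) - B.nab Y (B.o X Z) + B.o X (B.nab Y Z)
      = B.o ⁅X, Y⁆ Z := by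
    rw [← B.nab_torsion X Y, map_sub, LinearMap.sub_apply]
    have h := sub_eq_zero.2 (B.nab_c_symm X Y Z)
    rw [← sub_eq_zero, ← h]
    abel
  have hWE := congrArg (fun W => B.nab W B.E) hW
  simp only [map_add, map_sub, LinearMap.add_apply, LinearMap.sub_apply] at hWE
  simp only [B.nabS_L, map_add, map_sub, LinearMap.add_apply, hYX, ← hWE,
    sub_eq_zero.1 (B.euler_lin _ _)]
  rw [← lie_skew (B.o B.E Y) X, map_neg, LinearMap.neg_apply, hXY]
  abel
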